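/- arXiv:1911.13268 — 2 statements merged into one kernel-verified Lean document; each statement's English description precedes it below -/
import Mathlib

section
/- Let q ∈ [2,∞], δ ≥ 0, κ ≥ 0, and let A, B ∈ ℝ^{n×m} satisfy ‖A_j − B_j‖_q ≤ δ for every column j ∈ [m]. Let Π₁, Π₂ ∈ ℝ^{n×n} be orthogonal projection matrices with ‖Π₁‖_{q→2} ≤ κ and ‖Π₂‖_{q→2} ≤ κ, and suppose ‖A − Π₁A‖ ≤ ε₁ and ‖B − Π₂B‖ ≤ ε₂, where ‖·‖ is the spectral norm. Then for every η ∈ (0,1): ‖B − Π₁B‖ ≤ √(2η)·‖B‖ + √(1 + 1/η)·(ε₁ + ε₂ + 2√m·δκ), and likewise ‖A − Π₂A‖ ≤ √(2η)·‖A‖ + √(1 + 1/η)·(ε₁ + ε₂ + 2√m·δκ). -/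
open scoped BigOperators ENNReal
open Matrix

/-- The `ℓ_q` norm of a real vector, for `q ∈ [1,∞]` given as an extended nonnegative real
(`q = ⊤` is the max/sup norm). -/
noncomputable def vecNorm {ι : Type*} [Fintype ι] (q : ℝ≥0∞) (v : ι → ℝ) : ℝ :=
  if q = ⊤ then ⨆ i, |v i| else (∑ i, |v i| ^ q.toReal) ^ (1 / q.toReal)

/-- The `q → p` operator norm of a real matrix:
`‖M‖_{q→p} = sup { ‖Mx‖_p : ‖x‖_q ≤ 1 }`. -/
noncomputable def opNorm {ι₁ ι₂ : Type*} [Fintype ι₁] [Fintype ι₂] (q p : ℝ≥0∞)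
    (M : Matrix ι₁ ι₂ ℝ) : ℝ :=
  sSup {y : ℝ | ∃ x : ι₂ → ℝ, vecNorm q x ≤ 1 ∧ y = vecNorm p (M.mulVec x)}

/-- The squared Frobenius norm of a real matrix. -/
noncomputable def frobSq {ι₁ ι₂ : Type*} [Fintype ι₁] [Fintype ι₂] (M : Matrix ι₁ ι₂ ℝ) : ℝ :=
  ∑ i, ∑ j, (M i j) ^ 2

/-! Write `P = Π₁`, `Q = Π₂` and `E = A - B`. Since `Q` is a contraction, the identity
`B - QPB = (B - QB) + Q((A - PA) + PE) - QE` shows that `QPB` approximates `B` up to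
`γ = ε₁ + ε₂ + ‖PE‖ + ‖QE‖`, so `P` loses little length: `‖Bx‖ ≤ ‖PBx‖ + γ` for unit `x`. By
Pythagoras `‖Bx - PBx‖² = ‖Bx‖² - ‖PBx‖²`, and Young's inequality splits the cross term `2γ‖PBx‖`.
A robust projection maps each column of `E` to a vector of length at most `κδ`, and Cauchy–Schwarz
over the `m` columns gives `‖PE‖ ≤ √m κδ`. -/

section VecNorm

variable {ι : Type*} [Fintype ι]

theorem vecNorm_eq_norm_toLp (q : ℝ≥0∞) [hq : Fact (1 ≤ q)] (v : ι → ℝ) :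
    vecNorm q v = ‖WithLp.toLp q v‖ := by
  unfold vecNorm
  split_ifs with hq_top
  · subst hq_top
    simp only [PiLp.norm_eq_ciSup, Real.norm_eq_abs]
  · have hq_pos : 0 < q.toReal := ENNReal.toReal_pos (one_pos.trans_le hq.out).ne' hq_top
    simp only [PiLp.norm_eq_sum hq_pos, Real.norm_eq_abs]

theorem vecNorm_nonneg (q : ℝ≥0∞) [Fact (1 ≤ q)] (v : ι → ℝ) : 0 ≤ vecNorm q v := by
  simpa only [vecNorm_eq_norm_toLp] using norm_nonneg _

theorem vecNorm_zero (q : ℝ≥0∞) [Fact (1 ≤ q)] : vecNorm q (0 : ι → ℝ) = 0 := by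
  simp only [vecNorm_eq_norm_toLp, WithLp.toLp_zero, norm_zero]

theorem vecNorm_add_le (q : ℝ≥0∞) [Fact (1 ≤ q)] (v w : ι → ℝ) :
    vecNorm q (v + w) ≤ vecNorm q v + vecNorm q w := by
  simpa only [vecNorm_eq_norm_toLp, WithLp.toLp_add] using norm_add_le _ _

theorem vecNorm_sub_comm (q : ℝ≥0∞) (v w : ι → ℝ) :
    vecNorm q (v - w) = vecNorm q (w - v) := by
  simp only [vecNorm, Pi.sub_apply, abs_sub_comm]

theorem vecNorm_sum_smul_le {ι' : Type*} [Fintype ι'] (q : ℝ≥0∞) [Fact (1 ≤ q)] (c : ι' → ℝ)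
    (v : ι' → ι → ℝ) : vecNorm q (∑ j, c j • v j) ≤ ∑ j, |c j| * vecNorm q (v j) := by
  simpa only [vecNorm_eq_norm_toLp, WithLp.toLp_sum, WithLp.toLp_smul, norm_smul,
    Real.norm_eq_abs] using norm_sum_le Finset.univ fun j => WithLp.toLp q (c j • v j)

theorem vecNorm_two_sq (v : ι → ℝ) : vecNorm 2 v ^ 2 = v ⬝ᵥ v := by
  rw [vecNorm_eq_norm_toLp, EuclideanSpace.real_norm_sq_eq]
  simp only [dotProduct, sq]

theorem sum_abs_le_sqrt_card_mul_vecNorm_two (v : ι → ℝ) :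
    ∑ i, |v i| ≤ √(Fintype.card ι) * vecNorm 2 v := by
  refine le_of_sq_le_sq ?_ (mul_nonneg (Real.sqrt_nonneg _) (vecNorm_nonneg 2 v))
  calc (∑ i, |v i|) ^ 2
      ≤ Fintype.card ι * ∑ i, |v i| ^ 2 := sq_sum_le_card_mul_sum_sq
    _ = (√(Fintype.card ι) * vecNorm 2 v) ^ 2 := by
      rw [mul_pow, Real.sq_sqrt (Nat.cast_nonneg _), vecNorm_two_sq]
      simp only [dotProduct, sq, abs_mul_abs_self]

end VecNorm

section OpNorm

variable {ι₁ ι₂ ι₃ : Type*} [Fintype ι₁] [Fintype ι₂] [Fintype ι₃] {q p r : ℝ≥0∞}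
  [Fact (1 ≤ q)]

theorem opNorm_le_of_forall_vecNorm_le {M : Matrix ι₁ ι₂ ℝ} {C : ℝ}
    (hM : ∀ x, vecNorm q x ≤ 1 → vecNorm p (M *ᵥ x) ≤ C) : opNorm q p M ≤ C := by
  refine csSup_le ⟨_, 0, (vecNorm_zero q).trans_le zero_le_one, rfl⟩ ?_
  rintro _ ⟨x, hx, rfl⟩
  exact hM x hx

variable [Fact (1 ≤ p)]

theorem opNorm_eq_norm_toLpLin [DecidableEq ι₂] (M : Matrix ι₁ ι₂ ℝ) :
    opNorm q p M = ‖(toLpLin q p M).toContinuousLinearMap‖ := by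
  rw [← ContinuousLinearMap.sSup_unitClosedBall_eq_norm, opNorm]
  congr 1
  ext y
  simp only [Set.mem_ofPred_eq, Set.mem_image, mem_closedBall_zero_iff, vecNorm_eq_norm_toLp]
  constructor
  · rintro ⟨x, hx, rfl⟩
    exact ⟨WithLp.toLp q x, hx, rfl⟩
  · rintro ⟨x, hx, rfl⟩
    exact ⟨WithLp.ofLp x, hx, rfl⟩

theorem opNorm_nonneg (M : Matrix ι₁ ι₂ ℝ) : 0 ≤ opNorm q p M := by
  classical
  simpa only [opNorm_eq_norm_toLpLin] using norm_nonneg _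

theorem opNorm_add_le (M N : Matrix ι₁ ι₂ ℝ) :
    opNorm q p (M + N) ≤ opNorm q p M + opNorm q p N := by
  classical
  simpa only [opNorm_eq_norm_toLpLin, map_add] using norm_add_le _ _

theorem opNorm_sub_le (M N : Matrix ι₁ ι₂ ℝ) :
    opNorm q p (M - N) ≤ opNorm q p M + opNorm q p N := by
  classical
  simpa only [opNorm_eq_norm_toLpLin, map_sub] using norm_sub_le _ _

theorem vecNorm_mulVec_le (M : Matrix ι₁ ι₂ ℝ) (x : ι₂ → ℝ) :
    vecNorm p (M *ᵥ x) ≤ opNorm q p M * vecNorm q x := by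
  classical
  rw [opNorm_eq_norm_toLpLin, vecNorm_eq_norm_toLp, vecNorm_eq_norm_toLp]
  exact (toLpLin q p M).toContinuousLinearMap.le_opNorm (WithLp.toLp q x)

theorem vecNorm_mulVec_le_opNorm (M : Matrix ι₁ ι₂ ℝ) {x : ι₂ → ℝ} (hx : vecNorm q x ≤ 1) :
    vecNorm p (M *ᵥ x) ≤ opNorm q p M :=
  (vecNorm_mulVec_le M x).trans (mul_le_of_le_one_right (opNorm_nonneg M) hx)

theorem opNorm_mul_le [Fact (1 ≤ r)] (M : Matrix ι₁ ι₂ ℝ) (N : Matrix ι₂ ι₃ ℝ) :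
    opNorm q r (M * N) ≤ opNorm p r M * opNorm q p N := by
  refine opNorm_le_of_forall_vecNorm_le fun x hx => ?_
  calc vecNorm r ((M * N) *ᵥ x)
      = vecNorm r (M *ᵥ (N *ᵥ x)) := by rw [mulVec_mulVec]
    _ ≤ opNorm p r M * vecNorm p (N *ᵥ x) := vecNorm_mulVec_le M _
    _ ≤ opNorm p r M * opNorm q p N :=
      mul_le_mul_of_nonneg_left (vecNorm_mulVec_le_opNorm N hx) (opNorm_nonneg M)

theorem opNorm_mul_le_of_opNorm_le_one {M : Matrix ι₁ ι₂ ℝ} (hM : opNorm p p M ≤ 1)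
    (N : Matrix ι₂ ι₃ ℝ) : opNorm q p (M * N) ≤ opNorm q p N :=
  (opNorm_mul_le M N).trans (mul_le_of_le_one_left (opNorm_nonneg N) hM)

theorem opNorm_two_le_sqrt_card_mul {M : Matrix ι₁ ι₂ ℝ} {c : ℝ}
    (hM : ∀ j, vecNorm p (M.col j) ≤ c) : opNorm 2 p M ≤ √(Fintype.card ι₂) * c := by
  refine opNorm_le_of_forall_vecNorm_le fun x hx => ?_
  have vecNorm_le_sum : vecNorm p (M *ᵥ x) ≤ (∑ j, |x j|) * c := by
    have mulVec_eq_sum_col : M *ᵥ x = ∑ j, x j • M.col j := by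
      simp only [mulVec_eq_sum, op_smul_eq_smul, col]
    rw [mulVec_eq_sum_col, Finset.sum_mul]
    exact (vecNorm_sum_smul_le p _ _).trans
      (Finset.sum_le_sum fun j _ => mul_le_mul_of_nonneg_left (hM j) (abs_nonneg _))
  rcases isEmpty_or_nonempty ι₂ with _ | ⟨⟨j⟩⟩
  · simpa using vecNorm_le_sum
  · have c_nonneg : 0 ≤ c := (vecNorm_nonneg p _).trans (hM j)
    have sum_le : ∑ j, |x j| ≤ √(Fintype.card ι₂) :=
      (sum_abs_le_sqrt_card_mul_vecNorm_two x).trans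
        (mul_le_of_le_one_right (Real.sqrt_nonneg _) hx)
    exact vecNorm_le_sum.trans (mul_le_mul_of_nonneg_right sum_le c_nonneg)

theorem opNorm_two_mul_le_sqrt_card_mul {M : Matrix ι₁ ι₂ ℝ} {E : Matrix ι₂ ι₃ ℝ} {κ δ : ℝ}
    (hM : opNorm q p M ≤ κ) (hE : ∀ j, vecNorm q (E.col j) ≤ δ) :
    opNorm 2 p (M * E) ≤ √(Fintype.card ι₃) * (κ * δ) :=
  opNorm_two_le_sqrt_card_mul fun j =>
    calc vecNorm p (M *ᵥ E.col j)
        ≤ opNorm q p M * vecNorm q (E.col j) := vecNorm_mulVec_le M _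
      _ ≤ κ * δ := mul_le_mul hM (hE j) (vecNorm_nonneg q _) ((opNorm_nonneg M).trans hM)

end OpNorm

theorem le_sqrt_mul_add_sqrt_mul_of_sq_add_sq_eq {w s t γ η : ℝ} (hη : 0 < η) (hs : 0 ≤ s)
    (ht : 0 ≤ t) (hγ : 0 ≤ γ) (pythagoras : w ^ 2 + s ^ 2 = t ^ 2) (hts : t ≤ s + γ) :
    w ≤ √η * s + √(1 + 1 / η) * γ := by
  have young : 2 * s * γ ≤ η * s ^ 2 + η⁻¹ * γ ^ 2 := two_mul_le_add_mul_sq hη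
  have t_sq_le : t ^ 2 ≤ (s + γ) ^ 2 := pow_le_pow_left₀ ht hts 2
  refine le_of_sq_le_sq ?_ (by positivity)
  calc w ^ 2
      ≤ η * s ^ 2 + (1 + 1 / η) * γ ^ 2 := by rw [one_div]; linarith
    _ = (√η * s) ^ 2 + (√(1 + 1 / η) * γ) ^ 2 := by
      rw [mul_pow, mul_pow, Real.sq_sqrt (by positivity), Real.sq_sqrt (by positivity)]
    _ ≤ (√η * s + √(1 + 1 / η) * γ) ^ 2 :=
      pow_add_pow_le (by positivity) (by positivity) two_ne_zero

section Projection

variable {ι ι' : Type*} [Fintype ι] [Fintype ι'] {P Q : Matrix ι ι ℝ}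

theorem isStarProjection_of_isSymm (hP_symm : P.IsSymm) (hP_idem : P * P = P) :
    IsStarProjection P :=
  ⟨hP_idem, (conjTranspose_eq_transpose_of_trivial P).trans hP_symm.eq⟩

theorem vecNorm_sub_mulVec_sq_add_sq (hP : IsStarProjection P) (y : ι → ℝ) :
    vecNorm 2 (y - P *ᵥ y) ^ 2 + vecNorm 2 (P *ᵥ y) ^ 2 = vecNorm 2 y ^ 2 := by
  have transpose_eq : Pᵀ = P :=
    (conjTranspose_eq_transpose_of_trivial P).symm.trans hP.isSelfAdjoint.star_eq
  have inner_self : P *ᵥ y ⬝ᵥ P *ᵥ y = y ⬝ᵥ P *ᵥ y := by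
    rw [dotProduct_mulVec, vecMul_mulVec, transpose_eq, hP.isIdempotentElem.eq, dotProduct_comm,
      ← mulVec_transpose, transpose_eq]
  simp only [vecNorm_two_sq, sub_dotProduct, dotProduct_sub, inner_self, dotProduct_comm _ y]
  ring

theorem opNorm_two_le_one_of_isStarProjection (hP : IsStarProjection P) : opNorm 2 2 P ≤ 1 :=
  opNorm_le_of_forall_vecNorm_le fun y hy =>
    have sq_le : vecNorm 2 (P *ᵥ y) ^ 2 ≤ vecNorm 2 y ^ 2 :=
      (le_add_of_nonneg_left (sq_nonneg _)).trans_eq (vecNorm_sub_mulVec_sq_add_sq hP y)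
    (le_of_sq_le_sq sq_le (vecNorm_nonneg 2 y)).trans hy

theorem opNorm_sub_mul_le_of_isStarProjection (hP : IsStarProjection P)
    (hQ : opNorm 2 2 Q ≤ 1) (B : Matrix ι ι' ℝ) {η : ℝ} (hη : 0 < η) :
    opNorm 2 2 (B - P * B) ≤
      √η * opNorm 2 2 (P * B) + √(1 + 1 / η) * opNorm 2 2 (B - Q * (P * B)) := by
  refine opNorm_le_of_forall_vecNorm_le fun x hx => ?_
  have length_le : vecNorm 2 (B *ᵥ x) ≤
      vecNorm 2 ((P * B) *ᵥ x) + opNorm 2 2 (B - Q * (P * B)) :=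
    calc vecNorm 2 (B *ᵥ x)
        = vecNorm 2 (Q *ᵥ ((P * B) *ᵥ x) + (B - Q * (P * B)) *ᵥ x) := by
          rw [sub_mulVec, ← mulVec_mulVec x Q, add_sub_cancel]
      _ ≤ vecNorm 2 (Q *ᵥ ((P * B) *ᵥ x)) + vecNorm 2 ((B - Q * (P * B)) *ᵥ x) :=
          vecNorm_add_le 2 _ _
      _ ≤ vecNorm 2 ((P * B) *ᵥ x) + opNorm 2 2 (B - Q * (P * B)) :=
          add_le_add
            ((vecNorm_mulVec_le Q _).trans (mul_le_of_le_one_left (vecNorm_nonneg 2 _) hQ))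
            (vecNorm_mulVec_le_opNorm _ hx)
  have pythagoras := vecNorm_sub_mulVec_sq_add_sq hP (B *ᵥ x)
  rw [mulVec_mulVec, ← sub_mulVec] at pythagoras
  refine (le_sqrt_mul_add_sqrt_mul_of_sq_add_sq_eq hη (vecNorm_nonneg 2 _) (vecNorm_nonneg 2 _)
    (opNorm_nonneg _) pythagoras length_le).trans ?_
  gcongr
  exact vecNorm_mulVec_le_opNorm (P * B) hx

theorem opNorm_sub_mul_mul_le {q p : ℝ≥0∞} [Fact (1 ≤ q)] [Fact (1 ≤ p)]
    (hQ : opNorm p p Q ≤ 1) (A B : Matrix ι ι' ℝ) :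
    opNorm q p (B - Q * (P * B)) ≤
      opNorm q p (A - P * A) + opNorm q p (B - Q * B) +
        (opNorm q p (P * (A - B)) + opNorm q p (Q * (A - B))) := by
  calc opNorm q p (B - Q * (P * B))
      = opNorm q p ((B - Q * B) + Q * ((A - P * A) + P * (A - B)) - Q * (A - B)) := by
        congr 1
        simp only [Matrix.mul_sub, Matrix.mul_add]
        abel
    _ ≤ opNorm q p ((B - Q * B) + Q * ((A - P * A) + P * (A - B))) + opNorm q p (Q * (A - B)) :=
        opNorm_sub_le _ _
    _ ≤ opNorm q p (B - Q * B) + opNorm q p (Q * ((A - P * A) + P * (A - B))) +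
          opNorm q p (Q * (A - B)) := by
        gcongr
        exact opNorm_add_le _ _
    _ ≤ opNorm q p (B - Q * B) + (opNorm q p (A - P * A) + opNorm q p (P * (A - B))) +
          opNorm q p (Q * (A - B)) := by
        gcongr
        exact (opNorm_mul_le_of_opNorm_le_one hQ _).trans (opNorm_add_le _ _)
    _ = _ := by ring

theorem opNorm_sub_mul_le_of_vecNorm_col_sub_le {q : ℝ≥0∞} [Fact (1 ≤ q)]
    {δ κ ε₁ ε₂ η : ℝ} {A B : Matrix ι ι' ℝ} (hcols : ∀ j, vecNorm q ((A - B).col j) ≤ δ)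
    (hP : IsStarProjection P) (hQ : opNorm 2 2 Q ≤ 1)
    (hPκ : opNorm q 2 P ≤ κ) (hQκ : opNorm q 2 Q ≤ κ)
    (hA : opNorm 2 2 (A - P * A) ≤ ε₁) (hB : opNorm 2 2 (B - Q * B) ≤ ε₂) (hη : 0 < η) :
    opNorm 2 2 (B - P * B) ≤
      √η * opNorm 2 2 B + √(1 + 1 / η) * (ε₁ + ε₂ + 2 * √(Fintype.card ι') * δ * κ) := by
  have residual_le : opNorm 2 2 (B - Q * (P * B)) ≤
      ε₁ + ε₂ + 2 * √(Fintype.card ι') * δ * κ := by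
    linarith [opNorm_sub_mul_mul_le (P := P) (q := 2) hQ A B,
      opNorm_two_mul_le_sqrt_card_mul hPκ hcols, opNorm_two_mul_le_sqrt_card_mul hQκ hcols]
  have proj_mul_le : opNorm 2 2 (P * B) ≤ opNorm 2 2 B :=
    opNorm_mul_le_of_opNorm_le_one (opNorm_two_le_one_of_isStarProjection hP) B
  calc opNorm 2 2 (B - P * B)
      ≤ √η * opNorm 2 2 (P * B) + √(1 + 1 / η) * opNorm 2 2 (B - Q * (P * B)) :=
        opNorm_sub_mul_le_of_isStarProjection hP hQ B hη
    _ ≤ √η * opNorm 2 2 B + √(1 + 1 / η) * (ε₁ + ε₂ + 2 * √(Fintype.card ι') * δ * κ) := by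
        gcongr

end Projection

theorem spectral_identifiability_general {ι ι' : Type*} [Fintype ι] [Fintype ι']
    {q : ℝ≥0∞} (hq : 1 ≤ q) {δ κ ε₁ ε₂ η : ℝ} {A B : Matrix ι ι' ℝ}
    (hcols : ∀ j, vecNorm q (fun i => A i j - B i j) ≤ δ)
    {P₁ P₂ : Matrix ι ι ℝ} (hP₁ : IsStarProjection P₁) (hP₂ : IsStarProjection P₂)
    (hP₁κ : opNorm q 2 P₁ ≤ κ) (hP₂κ : opNorm q 2 P₂ ≤ κ)
    (hA : opNorm 2 2 (A - P₁ * A) ≤ ε₁) (hB : opNorm 2 2 (B - P₂ * B) ≤ ε₂) (hη : 0 < η) :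
    opNorm 2 2 (B - P₁ * B) ≤
      √η * opNorm 2 2 B + √(1 + 1 / η) * (ε₁ + ε₂ + 2 * √(Fintype.card ι') * δ * κ) ∧
    opNorm 2 2 (A - P₂ * A) ≤
      √η * opNorm 2 2 A + √(1 + 1 / η) * (ε₁ + ε₂ + 2 * √(Fintype.card ι') * δ * κ) := by
  have : Fact (1 ≤ q) := ⟨hq⟩
  have hcols_symm : ∀ j, vecNorm q ((B - A).col j) ≤ δ := fun j =>
    (vecNorm_sub_comm q _ _).trans_le (hcols j)
  have contraction₁ := opNorm_two_le_one_of_isStarProjection hP₁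
  have contraction₂ := opNorm_two_le_one_of_isStarProjection hP₂
  refine ⟨opNorm_sub_mul_le_of_vecNorm_col_sub_le hcols hP₁ contraction₂ hP₁κ hP₂κ hA hB hη, ?_⟩
  rw [add_comm ε₁ ε₂]
  exact opNorm_sub_mul_le_of_vecNorm_col_sub_le hcols_symm hP₂ contraction₁ hP₂κ hP₁κ hB hA hη

/-- If columns of `A, B` are `δ`-close in `ℓ_q`, `Π₁, Π₂` are `(κ,q)`-robust
orthogonal projections with `‖A − Π₁A‖ ≤ ε₁` and `‖B − Π₂B‖ ≤ ε₂` in spectral norm, then for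
every `η ∈ (0,1)`:
`‖B − Π₁B‖ ≤ √(2η)‖B‖ + √(1 + 1/η)(ε₁ + ε₂ + 2√m δκ)` and
`‖A − Π₂A‖ ≤ √(2η)‖A‖ + √(1 + 1/η)(ε₁ + ε₂ + 2√m δκ)`. -/
theorem spectral_identifiability {n m : ℕ} (q : ℝ≥0∞) (hq : 2 ≤ q)
    (δ κ : ℝ) (hδ : 0 ≤ δ) (hκ : 0 ≤ κ)
    (A B : Matrix (Fin n) (Fin m) ℝ)
    (hcols : ∀ j, vecNorm q (fun i => A i j - B i j) ≤ δ)
    (P₁ P₂ : Matrix (Fin n) (Fin n) ℝ)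
    (hP₁sym : P₁.IsSymm) (hP₁proj : P₁ * P₁ = P₁)
    (hP₂sym : P₂.IsSymm) (hP₂proj : P₂ * P₂ = P₂)
    (hP₁ : opNorm q 2 P₁ ≤ κ) (hP₂ : opNorm q 2 P₂ ≤ κ)
    (ε₁ ε₂ : ℝ)
    (hA : opNorm 2 2 (A - P₁ * A) ≤ ε₁) (hB : opNorm 2 2 (B - P₂ * B) ≤ ε₂)
    (η : ℝ) (hη0 : 0 < η) (hη1 : η < 1) :
    opNorm 2 2 (B - P₁ * B) ≤
      Real.sqrt (2 * η) * opNorm 2 2 B +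
        Real.sqrt (1 + 1 / η) * (ε₁ + ε₂ + 2 * Real.sqrt m * δ * κ) ∧
    opNorm 2 2 (A - P₂ * A) ≤
      Real.sqrt (2 * η) * opNorm 2 2 A +
        Real.sqrt (1 + 1 / η) * (ε₁ + ε₂ + 2 * Real.sqrt m * δ * κ) := by
  have η_le : √η ≤ √(2 * η) := Real.sqrt_le_sqrt (by linarith)
  obtain ⟨hB_le, hA_le⟩ := spectral_identifiability_general (one_le_two.trans hq) hcols
    (isStarProjection_of_isSymm hP₁sym hP₁proj) (isStarProjection_of_isSymm hP₂sym hP₂proj)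
    hP₁ hP₂ hA hB hη0
  rw [Fintype.card_fin] at hB_le hA_le
  exact ⟨hB_le.trans (by gcongr; exact opNorm_nonneg B),
    hA_le.trans (by gcongr; exact opNorm_nonneg A)⟩
end

section
/- There exist n ≥ 3 and positive semidefinite matrices M, B ∈ ℝ^{n×n}, with B of rank one, such that ‖M + B‖_{∞→2} < ‖M‖_{∞→2}. (One may take n divisible by 3, A = diag(u) with u having n/3 entries equal to 2 and 2n/3 entries equal to 1, B = (1/n)𝟙𝟙ᵀ, and M = A − B, where 𝟙 is the all-ones vector.) Hence the (∞→2) operator norm is not monotone. -/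
open scoped BigOperators ENNReal
open Matrix

/-!
Let `D = diag d` with `d ≥ 1`, and let `P` be the orthogonal projection onto the line of `v`. Then
`D - P = diag (d - 1) + (1 - P)` is positive semidefinite. The norm `‖D‖_{∞→2} = ‖d‖₂` is attained
at every sign vector `s`, so it is enough to choose `s` with `D s ⟂ v` but `s` not orthogonal to
`v`: by Pythagoras `‖(D - P) s‖₂² = ‖D s‖₂² + ‖P s‖₂²`, and subtracting `P` has increased the norm.
Such a choice exists in every dimension at least two, by taking `d = (2, 1)`, `v = (1, 2)` and
`s = (1, -1)` on two coordinates, and `d = 1`, `v = 0`, `s = 1` on the others.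
-/

section VecNorm

variable {ι : Type*} [Fintype ι]

lemma vecNorm_two (v : ι → ℝ) : vecNorm 2 v = √(v ⬝ᵥ v) := by
  simp [vecNorm, Real.sqrt_eq_rpow, dotProduct, ← sq]

lemma vecNorm_top_le_iff {v : ι → ℝ} {r : ℝ} (hr : 0 ≤ r) :
    vecNorm ⊤ v ≤ r ↔ ∀ i, |v i| ≤ r := by
  rw [vecNorm, if_pos rfl]
  exact ⟨fun h i ↦ (le_ciSup (Set.finite_range fun i ↦ |v i|).bddAbove i).trans h,
    fun h ↦ Real.iSup_le h hr⟩

lemma vecNorm_le_vecNorm_of_abs_le (p : ℝ≥0∞) {v w : ι → ℝ} (h : ∀ i, |v i| ≤ |w i|) :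
    vecNorm p v ≤ vecNorm p w := by
  unfold vecNorm
  split_ifs
  · exact ciSup_mono (Set.finite_range _).bddAbove h
  · gcongr ?_ ^ _
    exact Finset.sum_le_sum fun i _ ↦
      Real.rpow_le_rpow (abs_nonneg _) (h i) ENNReal.toReal_nonneg

lemma vecNorm_two_lt_vecNorm_two_sub {x y : ι → ℝ} (hxy : x ⬝ᵥ y = 0) (hy : y ≠ 0) :
    vecNorm 2 x < vecNorm 2 (x - y) := by
  have pythagoras : (x - y) ⬝ᵥ (x - y) = x ⬝ᵥ x + y ⬝ᵥ y := by
    simp [sub_dotProduct, dotProduct_sub, dotProduct_comm y x, hxy]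
  have hyy : 0 < y ⬝ᵥ y := by simpa using dotProduct_star_self_pos_iff.mpr hy
  rw [vecNorm_two, vecNorm_two, pythagoras]
  exact Real.sqrt_lt_sqrt (by simpa using dotProduct_star_self_nonneg x) (by linarith)

lemma vecNorm_diagonal_mulVec_of_abs_eq_one [DecidableEq ι] (p : ℝ≥0∞) (d : ι → ℝ)
    {s : ι → ℝ} (hs : ∀ i, |s i| = 1) : vecNorm p (diagonal d *ᵥ s) = vecNorm p d := by
  simp [vecNorm, mulVec_diagonal, abs_mul, hs]

end VecNorm

section OpNorm

variable {ι₁ ι₂ : Type*} [Fintype ι₁] [Fintype ι₂]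

lemma vecNorm_mulVec_le_opNorm_top (p : ℝ≥0∞) (M : Matrix ι₁ ι₂ ℝ) {x : ι₂ → ℝ}
    (hx : ∀ j, |x j| ≤ 1) : vecNorm p (M *ᵥ x) ≤ opNorm ⊤ p M := by
  refine le_csSup ⟨vecNorm p fun i ↦ ∑ j, |M i j|, ?_⟩
    ⟨x, (vecNorm_top_le_iff zero_le_one).mpr hx, rfl⟩
  rintro _ ⟨y, hy, rfl⟩
  refine vecNorm_le_vecNorm_of_abs_le p fun i ↦ ?_
  calc |∑ j, M i j * y j| ≤ ∑ j, |M i j * y j| := Finset.abs_sum_le_sum_abs _ _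
    _ ≤ ∑ j, |M i j| := Finset.sum_le_sum fun j _ ↦ by
      rw [abs_mul]
      exact mul_le_of_le_one_right (abs_nonneg _) ((vecNorm_top_le_iff zero_le_one).mp hy j)
    _ ≤ |(∑ j, |M i j|)| := le_abs_self _

lemma opNorm_top_diagonal [DecidableEq ι₁] (p : ℝ≥0∞) (d : ι₁ → ℝ) :
    opNorm ⊤ p (diagonal d) = vecNorm p d := by
  apply le_antisymm
  · refine csSup_le ⟨_, 0, (vecNorm_top_le_iff zero_le_one).mpr (by simp), rfl⟩ ?_
    rintro _ ⟨x, hx, rfl⟩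
    refine vecNorm_le_vecNorm_of_abs_le p fun i ↦ ?_
    rw [mulVec_diagonal, abs_mul]
    exact mul_le_of_le_one_right (abs_nonneg _) ((vecNorm_top_le_iff zero_le_one).mp hx i)
  · rw [← vecNorm_diagonal_mulVec_of_abs_eq_one p d (s := 1) (by simp)]
    exact vecNorm_mulVec_le_opNorm_top p _ (by simp)

lemma opNorm_top_two_diagonal_lt_sub [DecidableEq ι₁] {d s : ι₁ → ℝ} {P : Matrix ι₁ ι₁ ℝ}
    (hs : ∀ i, |s i| = 1) (horth : (diagonal d *ᵥ s) ⬝ᵥ (P *ᵥ s) = 0) (hPs : P *ᵥ s ≠ 0) :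
    opNorm ⊤ 2 (diagonal d) < opNorm ⊤ 2 (diagonal d - P) :=
  calc opNorm ⊤ 2 (diagonal d) = vecNorm 2 (diagonal d *ᵥ s) := by
        rw [opNorm_top_diagonal, vecNorm_diagonal_mulVec_of_abs_eq_one 2 d hs]
    _ < vecNorm 2 ((diagonal d - P) *ᵥ s) := by
        rw [sub_mulVec]
        exact vecNorm_two_lt_vecNorm_two_sub horth hPs
    _ ≤ opNorm ⊤ 2 (diagonal d - P) :=
        vecNorm_mulVec_le_opNorm_top 2 _ fun i ↦ (hs i).le

end OpNorm

section LineProj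

variable {𝕜 ι : Type*} [RCLike 𝕜] [Fintype ι]

/-- The matrix of the orthogonal projection onto the line spanned by `v`. The inverse makes it the
zero matrix when `v = 0`, which is again the projection onto the span of `v`. -/
noncomputable def lineProj (v : ι → 𝕜) : Matrix ι ι 𝕜 :=
  (star v ⬝ᵥ v)⁻¹ • vecMulVec v (star v)

lemma lineProj_mulVec (v x : ι → 𝕜) :
    lineProj v *ᵥ x = ((star v ⬝ᵥ x) / (star v ⬝ᵥ v)) • v := by
  simp [lineProj, smul_mulVec, vecMulVec_mulVec, smul_smul, div_eq_inv_mul]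

open scoped ComplexOrder in
lemma lineProj_mulVec_self (v : ι → 𝕜) : lineProj v *ᵥ v = v := by
  rcases eq_or_ne v 0 with rfl | hv
  · exact mulVec_zero _
  · rw [lineProj_mulVec, div_self (mt dotProduct_star_self_eq_zero.mp hv), one_smul]

lemma isStarProjection_lineProj (v : ι → 𝕜) : IsStarProjection (lineProj v) where
  isIdempotentElem :=
    calc lineProj v * lineProj v
        = (star v ⬝ᵥ v)⁻¹ • vecMulVec (lineProj v *ᵥ v) (star v) := by
          rw [← mul_vecMulVec, ← Matrix.mul_smul, ← lineProj]
      _ = lineProj v := by rw [lineProj_mulVec_self, ← lineProj]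
  isSelfAdjoint := by
    simp [lineProj, IsSelfAdjoint, star_eq_conjTranspose, conjTranspose_vecMulVec,
      ← star_dotProduct_star]

lemma range_mulVecLin_lineProj (v : ι → 𝕜) :
    LinearMap.range (lineProj v).mulVecLin = 𝕜 ∙ v := by
  apply le_antisymm
  · rintro _ ⟨x, rfl⟩
    rw [mulVecLin_apply, lineProj_mulVec]
    exact Submodule.smul_mem _ _ (Submodule.mem_span_singleton_self v)
  · rw [Submodule.span_singleton_le_iff_mem]
    exact ⟨v, lineProj_mulVec_self v⟩

lemma rank_lineProj {v : ι → 𝕜} (hv : v ≠ 0) : (lineProj v).rank = 1 := by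
  rw [Matrix.rank, range_mulVecLin_lineProj, finrank_span_singleton hv]

open scoped ComplexOrder MatrixOrder in
lemma posSemidef_lineProj (v : ι → 𝕜) : (lineProj v).PosSemidef :=
  (isStarProjection_lineProj v).nonneg.posSemidef

open scoped ComplexOrder MatrixOrder in
lemma posSemidef_diagonal_sub_lineProj [DecidableEq ι] {d : ι → 𝕜} (hd : 1 ≤ d) (v : ι → 𝕜) :
    (diagonal d - lineProj v).PosSemidef := by
  have hdiag : (diagonal (d - 1)).PosSemidef := posSemidef_diagonal_iff.mpr fun i ↦ by
    simpa using hd i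
  have hsplit : diagonal d - lineProj v = diagonal (d - 1) + (1 - lineProj v) := by
    rw [← add_sub_assoc, ← diagonal_one, diagonal_add]
    simp
  rw [hsplit]
  exact hdiag.add (isStarProjection_lineProj v).one_sub_nonneg.posSemidef

end LineProj

theorem infty_two_norm_not_monotone_general {ι : Type*} [Fintype ι] [Nontrivial ι] :
    ∃ M B : Matrix ι ι ℝ, M.PosSemidef ∧ B.PosSemidef ∧ B.rank = 1 ∧
      opNorm ⊤ 2 (M + B) < opNorm ⊤ 2 M := by
  classical
  obtain ⟨i, j, hij⟩ := exists_pair_ne ι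
  let d : ι → ℝ := 1 + Pi.single i 1
  let v : ι → ℝ := Pi.single i 1 + Pi.single j 2
  let s : ι → ℝ := 1 - Pi.single j 2
  have hd : 1 ≤ d := le_add_of_nonneg_right (Pi.single_nonneg.mpr zero_le_one)
  have hs : ∀ k, |s k| = 1 := fun k ↦ by
    rcases eq_or_ne k j with rfl | hk
    · norm_num [s]
    · simp [s, hk]
  have hvs : v ⬝ᵥ s = -1 := by
    norm_num [v, s, add_dotProduct, hij]
  have hv : v ≠ 0 := fun h ↦ by simp [h] at hvs
  have hvds : (diagonal d *ᵥ s) ⬝ᵥ v = 0 := by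
    norm_num [v, d, s, dotProduct_add, mulVec_diagonal, hij, hij.symm]
  refine ⟨diagonal d - lineProj v, lineProj v, posSemidef_diagonal_sub_lineProj hd v,
    posSemidef_lineProj v, rank_lineProj hv, ?_⟩
  rw [sub_add_cancel]
  apply opNorm_top_two_diagonal_lt_sub hs
  · simp [lineProj_mulVec, hvds]
  · simp [lineProj_mulVec, hvs, hv]

/-- There exist `n ≥ 3` and PSD matrices `M, B` with `B` of rank one such that
`‖M + B‖_{∞→2} < ‖M‖_{∞→2}`: the `∞→2` operator norm is not monotone. -/
theorem infty_two_norm_not_monotone :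
    ∃ n : ℕ, 3 ≤ n ∧
      ∃ M B : Matrix (Fin n) (Fin n) ℝ, M.PosSemidef ∧ B.PosSemidef ∧ B.rank = 1 ∧
        opNorm ⊤ 2 (M + B) < opNorm ⊤ 2 M :=
  ⟨3, le_rfl, infty_two_norm_not_monotone_general⟩
end
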